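/- arXiv:2210.02716 — 5 statements merged into one kernel-verified Lean document; each statement's English description precedes it below -/
import Mathlib

section
/- Let k₁, k₂ ∈ ℤ and s₁, s₂ ∈ ℂ. If (z/|z|)^{k₁} · |z|^{s₁} = (z/|z|)^{k₂} · |z|^{s₂} for every z ∈ ℂˣ, then k₁ = k₂ and s₁ = s₂. (Uniqueness of the parameters (k, s) of a quasi-character of ℂˣ.) -/
/-!
On the exponential coordinate `z = exp w` the quasi-character is
`exp (k * w.im * I + s * w.re)`, so along each line `w = t * v` through `0` it is a one-parameter
subgroup `t ↦ exp (t * a)`. The derivative at `t = 0` recovers its generator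
`a = k * v.im * I + s * v.re`, and the directions `v = I` and `v = 1` give `k` and `s`. Only the
values near `z = 1` enter.
-/

open Filter Topology

theorem eq_of_exp_smul_eventuallyEq {𝕜 𝔸 : Type*} [RCLike 𝕜] [NormedRing 𝔸]
    [NormedAlgebra 𝕜 𝔸] [CompleteSpace 𝔸] {a b : 𝔸}
    (h : (fun t : 𝕜 ↦ NormedSpace.exp (t • a)) =ᶠ[𝓝 0] fun t ↦ NormedSpace.exp (t • b)) :
    a = b := by
  have hasDerivAt_zero (x : 𝔸) : HasDerivAt (fun t : 𝕜 ↦ NormedSpace.exp (t • x)) x 0 := by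
    simpa using hasDerivAt_exp_smul_const x (0 : 𝕜)
  exact (hasDerivAt_zero a).unique ((hasDerivAt_zero b).congr_of_eventuallyEq h)

/-- The quasi-character `z ↦ (z/|z|)^k |z|^s` of `ℂˣ`, as a function on `ℂ` so that it can be
compared on neighbourhoods in `ℂ`; its value at `0` is junk. -/
noncomputable def quasiChar (k : ℤ) (s z : ℂ) : ℂ :=
  (z / ‖z‖) ^ k * Complex.exp (s * Real.log ‖z‖)

theorem quasiChar_exp (k : ℤ) (s w : ℂ) :
    quasiChar k s (Complex.exp w) = Complex.exp (k * (w.im * Complex.I) + s * w.re) := by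
  have exp_div_norm : Complex.exp w / ‖Complex.exp w‖ = Complex.exp (w.im * Complex.I) := by
    rw [Complex.norm_exp, Complex.ofReal_exp, ← Complex.exp_sub]
    congr 1
    exact sub_eq_of_eq_add' (Complex.re_add_im w).symm
  rw [quasiChar, exp_div_norm, Complex.norm_exp, Real.log_exp, ← Complex.exp_int_mul,
    ← Complex.exp_add]

theorem quasiChar_exp_smul (k : ℤ) (s v : ℂ) (t : ℝ) :
    quasiChar k s (Complex.exp (t • v)) =
      NormedSpace.exp (t • (k * (v.im * Complex.I) + s * v.re)) := by
  rw [quasiChar_exp, ← Complex.exp_eq_exp_ℂ, Complex.smul_re, Complex.smul_im]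
  simp only [smul_eq_mul, Complex.real_smul, Complex.ofReal_mul]
  congr 1
  ring

theorem generator_eq_of_quasiChar_eventuallyEq {k₁ k₂ : ℤ} {s₁ s₂ : ℂ}
    (h : quasiChar k₁ s₁ =ᶠ[𝓝 1] quasiChar k₂ s₂) (v : ℂ) :
    k₁ * (v.im * Complex.I) + s₁ * v.re = k₂ * (v.im * Complex.I) + s₂ * v.re := by
  have tendsto_exp_smul : Tendsto (fun t : ℝ ↦ Complex.exp (t • v)) (𝓝 0) (𝓝 1) :=
    Continuous.tendsto' (by fun_prop) 0 1 (by simp)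
  refine eq_of_exp_smul_eventuallyEq (𝕜 := ℝ) ?_
  filter_upwards [tendsto_exp_smul.eventually h] with t ht
  simpa only [quasiChar_exp_smul] using ht

theorem quasi_char_complex_params_unique_general {k₁ k₂ : ℤ} {s₁ s₂ : ℂ}
    (h : quasiChar k₁ s₁ =ᶠ[𝓝 1] quasiChar k₂ s₂) : k₁ = k₂ ∧ s₁ = s₂ := by
  have generator_eq := generator_eq_of_quasiChar_eventuallyEq h
  constructor
  · simpa using generator_eq Complex.I
  · simpa using generator_eq 1

/-- Uniqueness of the parameters `(k, s)` of a quasi-character of `ℂˣ`: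
if `(z/|z|)^k₁ ⬝ |z|^{s₁} = (z/|z|)^k₂ ⬝ |z|^{s₂}` for all `z ∈ ℂˣ`,
then `k₁ = k₂` and `s₁ = s₂`. Here `|z|^s := exp (s * log |z|)`. -/
theorem quasi_char_complex_params_unique (k₁ k₂ : ℤ) (s₁ s₂ : ℂ)
    (h : ∀ z : ℂˣ,
      ((z : ℂ) / ‖(z : ℂ)‖) ^ k₁ *
        Complex.exp (s₁ * Real.log (‖(z : ℂ)‖)) =
      ((z : ℂ) / ‖(z : ℂ)‖) ^ k₂ *
        Complex.exp (s₂ * Real.log (‖(z : ℂ)‖))) :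
    k₁ = k₂ ∧ s₁ = s₂ :=
  quasi_char_complex_params_unique_general <|
    (eventually_ne_nhds one_ne_zero).mono fun z hz ↦ h (Units.mk0 z hz)
end

section
/- Every continuous group homomorphism χ : ℝˣ → ℂˣ is of the form χ(x) = sgn(x)^k · |x|^s for a unique pair (k, s) ∈ {0, 1} × ℂ, where |x|^s := Complex.exp(s · Real.log |x|); moreover such a χ satisfies |χ(x)| = 1 for all x ∈ ℝˣ if and only if Re(s) = 0. -/
/-!
Averaging a continuous one-parameter semigroup `φ : ℝ → A` of a Banach algebra over a short interval
`[0, h]` gives a unit, because the averages tend to `φ 0 = 1` and units form an open set. The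
identity `φ x * ∫ t in 0..h, φ t = ∫ t in x..x + h, φ t` then exhibits `φ` as differentiable, with
`φ' = φ a`, whence `φ t = exp (t a)`.

As `ℝˣ = {±1} × exp ℝ`, a quasi-character `χ` of `ℝˣ` is determined by the sign `χ (-1)` and the
one-parameter semigroup `t ↦ χ (exp t)`; these correspond to `k` and `s`.
-/

open Filter Topology

section OneParameter

variable {A : Type*} [NormedRing A] [NormedAlgebra ℝ A] [CompleteSpace A]

lemma eventually_isUnit_intervalIntegral {f : ℝ → A} (hf : Continuous f) (h0 : IsUnit (f 0)) :
    ∀ᶠ h in 𝓝[≠] (0 : ℝ), IsUnit (∫ t in 0..h, f t) := by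
  have average_tendsto : Tendsto (fun h : ℝ ↦ h⁻¹ • ∫ t in 0..h, f t) (𝓝[≠] 0) (𝓝 (f 0)) := by
    simpa [slope_fun_def] using (hf.integral_hasStrictDerivAt 0 0).hasDerivAt.tendsto_slope
  filter_upwards [average_tendsto (Units.isOpen.mem_nhds h0), self_mem_nhdsWithin] with h hunit hne
  exact (isUnit_smul_iff (Units.mk0 h hne)⁻¹ _).1 hunit

lemma addChar_mul_intervalIntegral {φ : AddChar ℝ A} (hφ : Continuous φ) (x h : ℝ) :
    φ x * ∫ t in 0..h, φ t = (∫ t in 0..x + h, φ t) - ∫ t in 0..x, φ t := by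
  calc φ x * ∫ t in 0..h, φ t
      = ∫ t in 0..h, φ (x + t) := by
        simp only [AddChar.map_add_eq_mul]
        exact ((ContinuousLinearMap.mul ℝ A (φ x)).intervalIntegral_comp_comm
          (hφ.intervalIntegrable 0 h)).symm
    _ = ∫ t in x..x + h, φ t := by simp
    _ = (∫ t in 0..x + h, φ t) - ∫ t in 0..x, φ t :=
        (intervalIntegral.integral_interval_sub_left (hφ.intervalIntegrable _ _)
          (hφ.intervalIntegrable _ _)).symm

lemma addChar_exists_hasDerivAt {φ : AddChar ℝ A} (hφ : Continuous φ) :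
    ∃ a : A, ∀ x, HasDerivAt φ (φ x * a) x := by
  obtain ⟨h, u, hu⟩ := (eventually_isUnit_intervalIntegral hφ (by simp)).exists
  have eq_integral (x : ℝ) :
      φ x = ((∫ t in 0..x + h, φ t) - ∫ t in 0..x, φ t) * ↑u⁻¹ := by
    rw [← addChar_mul_intervalIntegral hφ, ← hu, Units.mul_inv_cancel_right]
  have hasDerivAt_integral (x : ℝ) : HasDerivAt (fun y ↦ ∫ t in 0..y, φ t) (φ x) x :=
    (hφ.integral_hasStrictDerivAt 0 x).hasDerivAt
  have hasDerivAt_φ (x : ℝ) : HasDerivAt φ ((φ (x + h) - φ x) * ↑u⁻¹) x :=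
    ((((hasDerivAt_integral (x + h)).comp_add_const x h).sub
      (hasDerivAt_integral x)).mul_const _).congr_of_eventuallyEq (.of_forall eq_integral)
  refine ⟨(φ h - 1) * ↑u⁻¹, fun x ↦ (hasDerivAt_φ x).congr_deriv ?_⟩
  rw [AddChar.map_add_eq_mul, ← mul_assoc, mul_sub, mul_one]

lemma eq_mul_exp_smul_of_hasDerivAt {f : ℝ → A} {a : A} (hf : ∀ x, HasDerivAt f (f x * a) x)
    (x : ℝ) : f x = f 0 * NormedSpace.exp (x • a) := by
  have deriv_eq_zero (y : ℝ) :
      HasDerivAt (fun y : ℝ ↦ f y * NormedSpace.exp (y • -a)) 0 y :=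
    ((hf y).mul (hasDerivAt_exp_smul_const' (-a) y)).congr_deriv (by noncomm_ring)
  have mul_exp_neg : f x * NormedSpace.exp (-(x • a)) = f 0 := by
    simpa using is_const_of_deriv_eq_zero (fun y ↦ (deriv_eq_zero y).differentiableAt)
      (fun y ↦ (deriv_eq_zero y).deriv) x 0
  have exp_neg_mul_exp : NormedSpace.exp (-(x • a)) * NormedSpace.exp (x • a) = 1 := by
    let := NormedAlgebra.restrictScalars ℚ ℝ A
    rw [← NormedSpace.exp_add_of_commute (Commute.neg_left rfl), neg_add_cancel,
      NormedSpace.exp_zero]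
  rw [← mul_exp_neg, mul_assoc, exp_neg_mul_exp, mul_one]

lemma exp_smul_injective :
    Function.Injective fun (a : A) (t : ℝ) ↦ NormedSpace.exp (t • a) := by
  intro a b h
  have hasDerivAt_zero (c : A) : HasDerivAt (fun t : ℝ ↦ NormedSpace.exp (t • c)) c 0 := by
    simpa using hasDerivAt_exp_smul_const c (0 : ℝ)
  exact (hasDerivAt_zero a).unique
    ((hasDerivAt_zero b).congr_of_eventuallyEq (Filter.EventuallyEq.of_eq h))

theorem addChar_existsUnique_eq_exp_smul {φ : AddChar ℝ A} (hφ : Continuous φ) :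
    ∃! a : A, ∀ t, φ t = NormedSpace.exp (t • a) := by
  obtain ⟨a, ha⟩ := addChar_exists_hasDerivAt hφ
  have φ_eq (t : ℝ) : φ t = NormedSpace.exp (t • a) := by
    simpa using eq_mul_exp_smul_of_hasDerivAt ha t
  exact ⟨a, φ_eq, fun b hb ↦ exp_smul_injective <| funext fun t ↦ (hb t).symm.trans (φ_eq t)⟩

end OneParameter

lemma existsUnique_eq_neg_one_zpow {K : Type*} [DivisionRing K] (hK : (-1 : K) ≠ 1) {z : K}
    (hz : z * z = 1) : ∃! k : ℤ, k ∈ ({0, 1} : Set ℤ) ∧ z = (-1) ^ k := by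
  rcases mul_self_eq_one_iff.1 hz with rfl | rfl
  · refine ⟨0, by simp, ?_⟩
    rintro k ⟨rfl | rfl, hk⟩
    · rfl
    · exact absurd (by simpa using hk.symm) hK
  · refine ⟨1, by simp, ?_⟩
    rintro k ⟨rfl | rfl, hk⟩
    · exact absurd (by simpa using hk) hK
    · rfl

/-- The one-parameter subgroup `t ↦ exp t` of `ℝˣ`, which parametrizes the positive reals. -/
noncomputable def expUnits : AddChar ℝ ℝˣ where
  toFun t := Units.mk0 (Real.exp t) (Real.exp_ne_zero t)
  map_zero_eq_one' := by ext; simp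
  map_add_eq_mul' s t := by ext; simp [Real.exp_add]

@[simp]
lemma coe_expUnits (t : ℝ) : (expUnits t : ℝ) = Real.exp t := rfl

lemma continuous_expUnits : Continuous expUnits :=
  Units.isEmbedding_val₀.continuous_iff.2 Real.continuous_exp

lemma expUnits_log_abs_of_pos {x : ℝˣ} (hx : 0 < (x : ℝ)) :
    expUnits (Real.log |(x : ℝ)|) = x := by
  ext
  rw [coe_expUnits, Real.exp_log (abs_pos.2 hx.ne'), abs_of_pos hx]

lemma neg_one_mul_expUnits_log_abs_of_neg {x : ℝˣ} (hx : (x : ℝ) < 0) :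
    -1 * expUnits (Real.log |(x : ℝ)|) = x := by
  ext
  rw [Units.val_mul, Units.val_neg, Units.val_one, coe_expUnits, Real.exp_log (abs_pos.2 hx.ne),
    abs_of_neg hx, neg_one_mul, neg_neg]

lemma eq_sign_zpow_mul_exp_iff (χ : ℝˣ →* ℂˣ) (k : ℤ) (s : ℂ) :
    (∀ x : ℝˣ, (χ x : ℂ) = ((Real.sign (x : ℝ) : ℝ) : ℂ) ^ k *
        Complex.exp (s * Real.log |(x : ℝ)|)) ↔
      (χ (-1) : ℂ) = (-1) ^ k ∧ ∀ t : ℝ, (χ (expUnits t) : ℂ) = Complex.exp (s * t) := by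
  constructor
  · intro h
    refine ⟨?_, fun t ↦ ?_⟩
    · simpa [Real.sign_neg] using h (-1)
    · simpa [Real.sign_of_pos (Real.exp_pos t)] using h (expUnits t)
  · rintro ⟨map_neg_one, map_expUnits⟩ x
    rcases lt_or_gt_of_ne x.ne_zero with hx | hx
    · nth_rw 1 [← neg_one_mul_expUnits_log_abs_of_neg hx]
      rw [map_mul, Units.val_mul, map_neg_one, map_expUnits, Real.sign_of_neg hx]
      simp
    · nth_rw 1 [← expUnits_log_abs_of_pos hx]
      rw [map_expUnits, Real.sign_of_pos hx]
      simp

lemma norm_sign_zpow_mul_exp (k : ℤ) (s : ℂ) (x : ℝˣ) :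
    ‖((Real.sign (x : ℝ) : ℝ) : ℂ) ^ k * Complex.exp (s * Real.log |(x : ℝ)|)‖ =
      |(x : ℝ)| ^ s.re := by
  have norm_sign : ‖((Real.sign (x : ℝ) : ℝ) : ℂ)‖ = 1 := by
    rcases Real.sign_apply_eq_of_ne_zero _ x.ne_zero with h | h <;> simp [h]
  rw [norm_mul, norm_zpow, norm_sign, one_zpow, one_mul, Complex.norm_exp, Complex.re_mul_ofReal,
    Real.rpow_def_of_pos (abs_pos.2 x.ne_zero), mul_comm]

lemma forall_abs_rpow_eq_one_iff {r : ℝ} : (∀ x : ℝˣ, |(x : ℝ)| ^ r = 1) ↔ r = 0 := by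
  refine ⟨fun h ↦ ?_, fun hr x ↦ by rw [hr, Real.rpow_zero]⟩
  simpa using h (expUnits 1)

lemma existsUnique_map_expUnits {χ : ℝˣ →* ℂˣ} (hχ : Continuous fun x : ℝˣ ↦ (χ x : ℂ)) :
    ∃! s : ℂ, ∀ t : ℝ, (χ (expUnits t) : ℂ) = Complex.exp (s * t) := by
  let φ : AddChar ℝ ℂ := ((Units.coeHom ℂ).comp χ).compAddChar expUnits
  have hφ : Continuous φ := hχ.comp continuous_expUnits
  simpa [φ, Complex.exp_eq_exp_ℂ, mul_comm] using addChar_existsUnique_eq_exp_smul hφ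

/-- Every continuous group homomorphism `χ : ℝˣ → ℂˣ` is of the form
`χ(x) = sgn(x)^k ⬝ |x|^s` for a unique pair `(k, s) ∈ {0, 1} × ℂ`, where
`|x|^s := exp (s * log |x|)`; moreover such a `χ` satisfies `|χ(x)| = 1`
for all `x ∈ ℝˣ` if and only if `Re s = 0`. -/
theorem quasi_char_real_classification (χ : ℝˣ →* ℂˣ)
    (hχ : Continuous fun x : ℝˣ => (χ x : ℂ)) :
    (∃! ks : ℤ × ℂ, ks.1 ∈ ({0, 1} : Set ℤ) ∧ ∀ x : ℝˣ,
      (χ x : ℂ) = ((Real.sign (x : ℝ) : ℝ) : ℂ) ^ ks.1 *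
        Complex.exp (ks.2 * Real.log |(x : ℝ)|)) ∧
    ∀ (k : ℤ) (s : ℂ), k ∈ ({0, 1} : Set ℤ) →
      (∀ x : ℝˣ, (χ x : ℂ) = ((Real.sign (x : ℝ) : ℝ) : ℂ) ^ k *
        Complex.exp (s * Real.log |(x : ℝ)|)) →
      ((∀ x : ℝˣ, ‖(χ x : ℂ)‖ = 1) ↔ s.re = 0) := by
  constructor
  · have map_neg_one_sq : (χ (-1) : ℂ) * χ (-1) = 1 := by
      rw [← Units.val_mul, ← map_mul, neg_one_mul, neg_neg, map_one, Units.val_one]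
    obtain ⟨k, ⟨hk, map_neg_one⟩, k_unique⟩ :=
      existsUnique_eq_neg_one_zpow (by norm_num) map_neg_one_sq
    obtain ⟨s, map_expUnits, s_unique⟩ := existsUnique_map_expUnits hχ
    simp only [eq_sign_zpow_mul_exp_iff]
    refine ⟨(k, s), ⟨hk, map_neg_one, map_expUnits⟩, ?_⟩
    rintro ⟨l, t⟩ ⟨hl, hl', ht⟩
    exact Prod.ext (k_unique l ⟨hl, hl'⟩) (s_unique t ht)
  · intro k s _ h
    simp only [h, norm_sign_zpow_mul_exp, forall_abs_rpow_eq_one_iff]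
end

section
/- Let F be a number field with F⁻ ≠ {0}. Then F⁺ + F⁻ is a subfield of F which is a CM field, with maximal totally real subfield F⁺; in particular F admits a CM subfield. -/
/-- The set `F⁺` of elements of `F` all of whose complex embeddings are real,
as a `ℚ`-subspace of `F`. -/
def Fplus (F : Type*) [Field F] [NumberField F] : Submodule ℚ F where
  carrier := {x | ∀ σ : F →+* ℂ, σ x = starRingEnd ℂ (σ x)}
  add_mem' := by
    intro a b ha hb σ
    simp only [map_add]
    linear_combination ha σ + hb σ
  zero_mem' := by intro σ; simp
  smul_mem' := by
    intro q x hx σ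
    simp only [Rat.smul_def, map_mul, map_ratCast]
    linear_combination (q : ℂ) * hx σ

/-- The set `F⁻` of elements of `F` all of whose complex embeddings are purely
imaginary, as a `ℚ`-subspace of `F`. -/
def Fminus (F : Type*) [Field F] [NumberField F] : Submodule ℚ F where
  carrier := {x | ∀ σ : F →+* ℂ, σ x = - starRingEnd ℂ (σ x)}
  add_mem' := by
    intro a b ha hb σ
    simp only [map_add]
    linear_combination ha σ + hb σ
  zero_mem' := by intro σ; simp
  smul_mem' := by
    intro q x hx σ
    simp only [Rat.smul_def, map_mul, map_ratCast]
    linear_combination (q : ℂ) * hx σ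

/-- A field is totally real if every ring embedding into `ℂ` has image
contained in `ℝ`. -/
def IsTotallyRealField (K : Type*) [Field K] : Prop :=
  ∀ (σ : K →+* ℂ) (x : K), (σ x).im = 0

/-- A field is CM if no ring embedding into `ℂ` has image contained in `ℝ`,
and it is a degree-2 extension of a totally real subfield. -/
def IsCMField (K : Type*) [Field K] : Prop :=
  (∀ σ : K →+* ℂ, ∃ x : K, (σ x).im ≠ 0) ∧
  ∃ k : Subfield K, IsTotallyRealField k ∧ Module.finrank k K = 2

/-!
Complex conjugation is well defined on the elements `x` for which some `y ∈ F` satisfies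
`σ y = conj (σ x)` for all `σ`; these form a subfield `K`, and `x = (x + y) / 2 + (x - y) / 2` shows
that `K = F⁺ + F⁻`. For a nonzero `δ ∈ F⁻`, the quotient of two elements of `F⁻` lies in `F⁺`, so
`F⁻ = F⁺ δ` and `K = F⁺ ⊕ F⁺ δ` is quadratic over `F⁺`. No embedding of `K` is real, since it maps
`δ` to a nonzero purely imaginary number.
-/

open NumberField (maximalRealSubfield)
open scoped ComplexConjugate Pointwise

theorem finrank_eq_two_of_forall_exists_add_smul_eq {k K : Type*} [Field k] [Ring K] [Nontrivial K]
    [Algebra k K] {δ : K} (hδ : ∀ a : k, algebraMap k K a ≠ δ)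
    (hspan : ∀ x : K, ∃ a b : k, algebraMap k K a + b • δ = x) : Module.finrank k K = 2 := by
  have hli : LinearIndependent k ![1, δ] := by
    rw [LinearIndependent.pair_iff' one_ne_zero]
    simpa only [← Algebra.algebraMap_eq_smul_one] using hδ
  have hsp : ⊤ ≤ Submodule.span k (Set.range ![1, δ]) := fun x _ ↦ by
    rw [Matrix.range_cons_cons_empty, Submodule.mem_span_pair]
    simpa only [← Algebra.algebraMap_eq_smul_one] using hspan x
  rw [Module.finrank_eq_card_basis (Module.Basis.mk hli hsp), Fintype.card_fin]

theorem isTotallyRealField_iff {K : Type*} [Field K] :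
    IsTotallyRealField K ↔ NumberField.IsTotallyReal K := by
  refine ⟨fun h ↦ ⟨fun v ↦ ?_⟩, fun _ σ x ↦ ?_⟩
  · rw [NumberField.InfinitePlace.isReal_iff, NumberField.ComplexEmbedding.isReal_iff]
    exact RingHom.ext fun x ↦ Complex.conj_eq_iff_im.mpr (h v.embedding x)
  · exact Complex.conj_eq_iff_im.mp
      (RingHom.congr_fun (NumberField.IsTotallyReal.complexEmbedding_isReal σ) x)

section IsComplexConjugate

variable {F : Type*} [Field F] {x y x' y' : F}

/-- `y` is the complex conjugate of `x` under all complex embeddings of `F` simultaneously. An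
element of `F⁺` is its own conjugate, and an element of `F⁻` is conjugate to its negative. -/
def IsComplexConjugate (x y : F) : Prop :=
  ∀ σ : F →+* ℂ, σ y = conj (σ x)

namespace IsComplexConjugate

theorem symm (h : IsComplexConjugate x y) : IsComplexConjugate y x := fun σ ↦ by simp [h σ]

theorem zero : IsComplexConjugate (0 : F) 0 := fun σ ↦ by simp

theorem one : IsComplexConjugate (1 : F) 1 := fun σ ↦ by simp

theorem add (h : IsComplexConjugate x y) (h' : IsComplexConjugate x' y') :
    IsComplexConjugate (x + x') (y + y') := fun σ ↦ by simp [h σ, h' σ]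

theorem neg (h : IsComplexConjugate x y) : IsComplexConjugate (-x) (-y) := fun σ ↦ by simp [h σ]

theorem mul (h : IsComplexConjugate x y) (h' : IsComplexConjugate x' y') :
    IsComplexConjugate (x * x') (y * y') := fun σ ↦ by simp [h σ, h' σ]

theorem inv (h : IsComplexConjugate x y) : IsComplexConjugate x⁻¹ y⁻¹ := fun σ ↦ by simp [h σ]

theorem rat_smul [CharZero F] (q : ℚ) (h : IsComplexConjugate x y) :
    IsComplexConjugate (q • x) (q • y) := fun σ ↦ by simp [Rat.smul_def, h σ]

end IsComplexConjugate

theorem mem_maximalRealSubfield_iff_isComplexConjugate :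
    x ∈ maximalRealSubfield F ↔ IsComplexConjugate x x :=
  forall_congr' fun _ ↦ eq_comm

theorem isComplexConjugate_coe_iff {E : Subfield F} [Algebra.IsAlgebraic E F] {x y : E} :
    IsComplexConjugate (x : F) y ↔ IsComplexConjugate x y := by
  refine ⟨fun h σ ↦ ?_, fun h σ ↦ h (σ.comp E.subtype)⟩
  have hlift (z : E) : NumberField.ComplexEmbedding.lift F σ z = σ z :=
    NumberField.ComplexEmbedding.lift_algebraMap_apply F σ z
  simpa only [hlift] using h (NumberField.ComplexEmbedding.lift F σ)

theorem maximalRealSubfield_eq_comap (E : Subfield F) [Algebra.IsAlgebraic E F] :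
    maximalRealSubfield E = (maximalRealSubfield F).comap E.subtype := by
  ext x
  simp only [Subfield.mem_comap, Subfield.coe_subtype,
    mem_maximalRealSubfield_iff_isComplexConjugate, isComplexConjugate_coe_iff]

/-- The subfield of elements having a complex conjugate in `F`; it is the field `F⁺ + F⁻`, see
`coe_conjSubfield`. -/
def conjSubfield (F : Type*) [Field F] : Subfield F where
  carrier := {x | ∃ y, IsComplexConjugate x y}
  mul_mem' := fun ⟨_, h⟩ ⟨_, h'⟩ ↦ ⟨_, h.mul h'⟩
  one_mem' := ⟨1, .one⟩
  add_mem' := fun ⟨_, h⟩ ⟨_, h'⟩ ↦ ⟨_, h.add h'⟩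
  zero_mem' := ⟨0, .zero⟩
  neg_mem' := fun ⟨_, h⟩ ↦ ⟨_, h.neg⟩
  inv_mem' := fun _ ⟨_, h⟩ ↦ ⟨_, h.inv⟩

theorem conjSubfield_conjSubfield [Algebra.IsAlgebraic (conjSubfield F) F] :
    conjSubfield (conjSubfield F) = ⊤ := by
  refine eq_top_iff.mpr fun ⟨x, y, hxy⟩ _ ↦ ?_
  exact ⟨⟨y, x, hxy.symm⟩, isComplexConjugate_coe_iff.mp hxy⟩

theorem maximalRealSubfield_le_conjSubfield : maximalRealSubfield F ≤ conjSubfield F :=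
  fun x hx ↦ ⟨x, mem_maximalRealSubfield_iff_isComplexConjugate.mp hx⟩

theorem image_coe_maximalRealSubfield_conjSubfield [Algebra.IsAlgebraic (conjSubfield F) F] :
    (fun x : conjSubfield F ↦ (x : F)) '' maximalRealSubfield (conjSubfield F) =
      maximalRealSubfield F := by
  rw [maximalRealSubfield_eq_comap]
  exact (Subtype.image_preimage_coe _ _).trans
    (Set.inter_eq_right.mpr maximalRealSubfield_le_conjSubfield)

end IsComplexConjugate

section TotallyImaginary

variable {F : Type*} [Field F] [CharZero F] {x y : F}

/-- The `ℚ`-subspace `F⁻` of elements that every complex embedding maps to a purely imaginary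
number, for fields `F` that need not be finite over `ℚ`. -/
def totallyImaginarySubspace (F : Type*) [Field F] [CharZero F] : Submodule ℚ F where
  carrier := {x | IsComplexConjugate x (-x)}
  add_mem' h h' := by simpa only [Set.mem_ofPred_eq, neg_add] using h.add h'
  zero_mem' := by simpa only [Set.mem_ofPred_eq, neg_zero] using IsComplexConjugate.zero
  smul_mem' q _ h := by simpa only [Set.mem_ofPred_eq, smul_neg] using h.rat_smul q

theorem mem_totallyImaginarySubspace_iff :
    x ∈ totallyImaginarySubspace F ↔ IsComplexConjugate x (-x) :=
  .rfl

theorem div_mem_maximalRealSubfield_of_mem_totallyImaginarySubspace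
    (hx : x ∈ totallyImaginarySubspace F) (hy : y ∈ totallyImaginarySubspace F) :
    x / y ∈ maximalRealSubfield F := by
  rw [mem_maximalRealSubfield_iff_isComplexConjugate]
  simpa only [inv_neg, neg_mul_neg, div_eq_mul_inv] using hx.mul hy.inv

theorem im_ne_zero_of_mem_totallyImaginarySubspace (hx : x ∈ totallyImaginarySubspace F)
    (hx0 : x ≠ 0) (σ : F →+* ℂ) : (σ x).im ≠ 0 := by
  intro him
  have hneg : -σ x = σ x := by rw [← map_neg, hx σ, Complex.conj_eq_iff_im.mpr him]
  exact hx0 ((map_eq_zero σ).mp (self_eq_neg.mp hneg.symm))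

theorem notMem_maximalRealSubfield_of_mem_totallyImaginarySubspace [Nonempty (F →+* ℂ)]
    (hx : x ∈ totallyImaginarySubspace F) (hx0 : x ≠ 0) : x ∉ maximalRealSubfield F := fun hreal ↦
  let σ : F →+* ℂ := Classical.arbitrary _
  im_ne_zero_of_mem_totallyImaginarySubspace hx hx0 σ (Complex.conj_eq_iff_im.mp (hreal σ))

theorem coe_conjSubfield :
    (conjSubfield F : Set F) =
      (maximalRealSubfield F : Set F) + (totallyImaginarySubspace F : Set F) := by
  refine Set.Subset.antisymm ?_ ?_
  · rintro x ⟨y, hxy⟩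
    have hre : x + y ∈ maximalRealSubfield F := by
      rw [mem_maximalRealSubfield_iff_isComplexConjugate]
      simpa only [add_comm y x] using hxy.add hxy.symm
    have him : x - y ∈ totallyImaginarySubspace F := by
      rw [mem_totallyImaginarySubspace_iff]
      simpa only [neg_sub, ← sub_eq_add_neg, neg_add_eq_sub] using hxy.add hxy.symm.neg
    refine ⟨(x + y) / 2, div_mem hre (ofNat_mem _ 2), (2⁻¹ : ℚ) • (x - y),
      Submodule.smul_mem _ _ him, ?_⟩
    simp only [Rat.smul_def]
    push_cast
    ring
  · rintro _ ⟨a, ha, b, hb, rfl⟩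
    exact add_mem (maximalRealSubfield_le_conjSubfield ha) ⟨-b, hb⟩

theorem finrank_maximalRealSubfield_eq_two [Nonempty (F →+* ℂ)] (hconj : conjSubfield F = ⊤)
    (h : totallyImaginarySubspace F ≠ ⊥) : Module.finrank (maximalRealSubfield F) F = 2 := by
  obtain ⟨δ, hδ, hδ0⟩ := (Submodule.ne_bot_iff _).mp h
  refine finrank_eq_two_of_forall_exists_add_smul_eq (δ := δ) (fun a ha ↦ ?_) fun x ↦ ?_
  · exact notMem_maximalRealSubfield_of_mem_totallyImaginarySubspace hδ hδ0 (ha ▸ a.2)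
  · have hx : x ∈ (conjSubfield F : Set F) := by simp [hconj]
    rw [coe_conjSubfield] at hx
    obtain ⟨a, ha, b, hb, rfl⟩ := hx
    refine ⟨⟨a, ha⟩, ⟨b / δ, ?_⟩, ?_⟩
    · exact div_mem_maximalRealSubfield_of_mem_totallyImaginarySubspace hb hδ
    · exact congrArg (a + ·) (div_mul_cancel₀ b hδ0)

theorem isCMField_of_conjSubfield_eq_top [Algebra.IsAlgebraic ℚ F] (hconj : conjSubfield F = ⊤)
    (h : totallyImaginarySubspace F ≠ ⊥) : IsCMField F := by
  obtain ⟨δ, hδ, hδ0⟩ := (Submodule.ne_bot_iff _).mp h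
  exact ⟨fun σ ↦ ⟨δ, im_ne_zero_of_mem_totallyImaginarySubspace hδ hδ0 σ⟩,
    maximalRealSubfield F, isTotallyRealField_iff.mpr inferInstance,
    finrank_maximalRealSubfield_eq_two hconj h⟩

theorem totallyImaginarySubspace_conjSubfield_ne_bot [Algebra.IsAlgebraic (conjSubfield F) F]
    (h : totallyImaginarySubspace F ≠ ⊥) : totallyImaginarySubspace (conjSubfield F) ≠ ⊥ := by
  obtain ⟨δ, hδ, hδ0⟩ := (Submodule.ne_bot_iff _).mp h
  exact (Submodule.ne_bot_iff _).mpr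
    ⟨⟨δ, -δ, hδ⟩, isComplexConjugate_coe_iff.mp hδ, fun h0 ↦ hδ0 (congrArg Subtype.val h0)⟩

end TotallyImaginary

theorem Fplus_add_Fminus_isCM_general (F : Type*) [Field F] [CharZero F]
    [Algebra.IsAlgebraic ℚ F] (h : totallyImaginarySubspace F ≠ ⊥) :
    ∃ K : Subfield F,
      (K : Set F) = (maximalRealSubfield F : Set F) + (totallyImaginarySubspace F : Set F) ∧
      IsCMField K ∧
      ∃ k : Subfield K,
        (fun x : K => (x : F)) '' (k : Set K) = (maximalRealSubfield F : Set F) ∧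
        IsTotallyRealField k ∧ Module.finrank k K = 2 ∧
        ∀ k' : Subfield K, IsTotallyRealField k' → k' ≤ k := by
  have : Algebra.IsAlgebraic (conjSubfield F) F := .tower_top (K := ℚ) _
  have : Algebra.IsAlgebraic ℚ (conjSubfield F) := .tower_bot ℚ _ F
  have hK := totallyImaginarySubspace_conjSubfield_ne_bot h
  refine ⟨conjSubfield F, coe_conjSubfield,
    isCMField_of_conjSubfield_eq_top conjSubfield_conjSubfield hK,
    maximalRealSubfield _, image_coe_maximalRealSubfield_conjSubfield,
    isTotallyRealField_iff.mpr inferInstance,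
    finrank_maximalRealSubfield_eq_two conjSubfield_conjSubfield hK, fun k' hk' ↦ ?_⟩
  have : NumberField.IsTotallyReal k' := isTotallyRealField_iff.mp hk'
  exact NumberField.IsTotallyReal.le_maximalRealSubfield k'

theorem coe_Fplus (F : Type*) [Field F] [NumberField F] :
    (Fplus F : Set F) = maximalRealSubfield F :=
  Set.ext fun _ ↦ mem_maximalRealSubfield_iff_isComplexConjugate.symm

theorem Fminus_eq_totallyImaginarySubspace (F : Type*) [Field F] [NumberField F] :
    Fminus F = totallyImaginarySubspace F :=
  Submodule.ext fun x ↦ forall_congr' fun σ ↦ by rw [map_neg, neg_eq_iff_eq_neg]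

/-- If `F⁻ ≠ {0}`, then `F⁺ + F⁻` is a subfield of `F` which is a CM field,
with maximal totally real subfield `F⁺`; in particular `F` admits a CM
subfield. -/
theorem Fplus_add_Fminus_isCM (F : Type*) [Field F] [NumberField F]
    (h : Fminus F ≠ ⊥) :
    ∃ K : Subfield F, (K : Set F) = ((Fplus F + Fminus F : Submodule ℚ F) : Set F) ∧
      IsCMField K ∧
      ∃ k : Subfield K,
        (fun x : K => (x : F)) '' (k : Set K) = (Fplus F : Set F) ∧
        IsTotallyRealField k ∧ Module.finrank k K = 2 ∧
        ∀ k' : Subfield K, IsTotallyRealField k' → k' ≤ k := by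
  rw [Submodule.add_eq_sup, Submodule.coe_sup, coe_Fplus, Fminus_eq_totallyImaginarySubspace]
  exact Fplus_add_Fminus_isCM_general F (Fminus_eq_totallyImaginarySubspace F ▸ h)
end

section
/- Let F be a number field with F⁻ ≠ {0}. Then there exists a ∈ F⁻ whose minimal polynomial over ℚ has degree 2 · dim_ℚ F⁻, and for any such a one has ℚ(a) = F⁺ + F⁻. -/
/-! Multiplication by a nonzero `e ∈ F⁻` exchanges `F⁺` and `F⁻`. Hence the field `F⁺ + F⁻` has
degree `2 * dim F⁻` over `ℚ`, and `F⁻` generates it, because `x = (x * e) * e⁻¹` for `x ∈ F⁺`. The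
subspace `F⁻` is the union of its intersections with the subfields `ℚ(a)`, `a ∈ F⁻`. There are only
finitely many such subfields and `ℚ` is infinite, so one of them contains all of `F⁻`. -/

open IntermediateField Module

section SimpleExtensions

variable {K L : Type*} [Field K] [Field L] [Algebra K L]

theorem exists_mem_adjoin_simple_eq_adjoin [Infinite K] [Finite (IntermediateField K L)]
    (V : Submodule K L) : ∃ a ∈ V, K⟮a⟯ = adjoin K (V : Set L) := by
  let simpleSubfields : Set (IntermediateField K L) := (fun a ↦ K⟮a⟯) '' (V : Set L)
  let interV (E : simpleSubfields) : Submodule K V :=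
    (Subalgebra.toSubmodule E.1.toSubalgebra).comap V.subtype
  have interV_cover : ⋃ E, (interV E : Set V) = Set.univ :=
    Set.eq_univ_of_forall fun v ↦
      Set.mem_iUnion.2 ⟨⟨K⟮v.1⟯, v.1, v.2, rfl⟩, mem_adjoin_simple_self K v.1⟩
  obtain ⟨⟨_, a, ha, rfl⟩, interV_eq_top⟩ := Subspace.exists_eq_top_of_iUnion_eq_univ interV_cover
  have V_le : (V : Set L) ⊆ K⟮a⟯ := fun v hv ↦ by
    have : (⟨v, hv⟩ : V) ∈ interV ⟨K⟮a⟯, a, ha, rfl⟩ := interV_eq_top ▸ Submodule.mem_top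
    exact this
  exact ⟨a, ha, le_antisymm (adjoin.mono K _ _ (Set.singleton_subset_iff.2 ha))
    (adjoin_le_iff.2 V_le)⟩

theorem adjoin_simple_eq_iff_natDegree_minpoly_eq_finrank {E : IntermediateField K L}
    [FiniteDimensional K E] {a : L} (ha : a ∈ E) :
    K⟮a⟯ = E ↔ (minpoly K a).natDegree = finrank K E := by
  have integral : IsIntegral K a :=
    (Algebra.IsIntegral.isIntegral (⟨a, ha⟩ : E)).map E.val
  rw [eq_iff_finrank_eq_of_le (adjoin_simple_le_iff.2 ha), adjoin.finrank integral]

end SimpleExtensions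

theorem adjoin_rat_toSubfield {L : Type*} [Field L] [Algebra ℚ L] (S : Set L) :
    (adjoin ℚ S).toSubfield = Subfield.closure S := by
  refine le_antisymm ?_ (Subfield.closure_mono Set.subset_union_right)
  rw [adjoin_toSubfield, Subfield.closure_le]
  rintro x (⟨q, rfl⟩ | hx)
  · rw [eq_ratCast]
    exact SubfieldClass.ratCast_mem _ q
  · exact Subfield.subset_closure hx

theorem finrank_le_finrank_of_mul_mem {R A : Type*} [CommRing R] [StrongRankCondition R] [Ring A]
    [NoZeroDivisors A] [Algebra R A] {P M : Submodule R A} [Module.Finite R M] {e : A}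
    (he : e ≠ 0) (mul_mem : ∀ x ∈ P, e * x ∈ M) : finrank R P ≤ finrank R M :=
  LinearMap.finrank_le_finrank_of_injective
    (f := (LinearMap.mulLeft R e).restrict mul_mem) fun _ _ h ↦
      Subtype.ext (mul_left_cancel₀ he (congrArg Subtype.val h))

section RealAndImaginaryParts

variable {F : Type*} [Field F] [NumberField F] {x y : F}

theorem one_mem_Fplus : (1 : F) ∈ Fplus F := fun σ ↦ by simp only [map_one]

theorem mul_mem_Fplus (hx : x ∈ Fplus F) (hy : y ∈ Fplus F) : x * y ∈ Fplus F := fun σ ↦ by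
  rw [map_mul, map_mul, ← hx σ, ← hy σ]

theorem mul_mem_Fminus (hx : x ∈ Fplus F) (hy : y ∈ Fminus F) : x * y ∈ Fminus F := fun σ ↦ by
  rw [map_mul, map_mul, ← mul_neg, ← hx σ, ← hy σ]

theorem mul_mem_Fplus_of_mem_Fminus (hx : x ∈ Fminus F) (hy : y ∈ Fminus F) :
    x * y ∈ Fplus F := fun σ ↦ by
  rw [map_mul, map_mul, ← neg_mul_neg (starRingEnd ℂ (σ x)), ← hx σ, ← hy σ]

variable (F) in
theorem disjoint_Fplus_Fminus : Disjoint (Fplus F) (Fminus F) := by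
  refine Submodule.disjoint_def.2 fun x hplus hminus ↦ ?_
  obtain ⟨σ⟩ : Nonempty (F →+* ℂ) := inferInstance
  have σx_eq_neg : σ x = -σ x := (hminus σ).trans (congrArg Neg.neg (hplus σ).symm)
  exact (map_eq_zero σ).1 (self_eq_neg.1 σx_eq_neg)

theorem finrank_Fplus_eq_finrank_Fminus (h : Fminus F ≠ ⊥) :
    finrank ℚ (Fplus F) = finrank ℚ (Fminus F) := by
  obtain ⟨e, he, he0⟩ := (Submodule.ne_bot_iff _).1 h
  exact le_antisymm
    (finrank_le_finrank_of_mul_mem he0 fun x hx ↦ mul_comm x e ▸ mul_mem_Fminus hx he)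
    (finrank_le_finrank_of_mul_mem he0 fun _ hx ↦ mul_mem_Fplus_of_mem_Fminus he hx)

theorem mul_mem_Fplus_sup_Fminus (hx : x ∈ Fplus F ⊔ Fminus F) (hy : y ∈ Fplus F ⊔ Fminus F) :
    x * y ∈ Fplus F ⊔ Fminus F := by
  obtain ⟨p, hp, m, hm, rfl⟩ := Submodule.mem_sup.1 hx
  obtain ⟨q, hq, n, hn, rfl⟩ := Submodule.mem_sup.1 hy
  exact Submodule.mem_sup.2
    ⟨p * q + m * n, add_mem (mul_mem_Fplus hp hq) (mul_mem_Fplus_of_mem_Fminus hm hn),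
      p * n + q * m, add_mem (mul_mem_Fminus hp hn) (mul_mem_Fminus hq hm), by ring⟩

variable (F) in
/-- The subfield `F⁺ + F⁻` of `F`, which is the largest CM subfield when `F⁻ ≠ {0}`. It is built
as a subalgebra, which is closed under inverses because `F` is algebraic over `ℚ`. -/
def FplusAddFminus : IntermediateField ℚ F :=
  subalgebraEquivIntermediateField <|
    (Fplus F ⊔ Fminus F).toSubalgebra (Submodule.mem_sup_left one_mem_Fplus)
      fun _ _ ↦ mul_mem_Fplus_sup_Fminus

theorem mem_FplusAddFminus : x ∈ FplusAddFminus F ↔ x ∈ Fplus F ⊔ Fminus F := Iff.rfl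

theorem finrank_FplusAddFminus (h : Fminus F ≠ ⊥) :
    finrank ℚ (FplusAddFminus F) = 2 * finrank ℚ (Fminus F) :=
  calc finrank ℚ (FplusAddFminus F)
      = finrank ℚ (Fplus F ⊔ Fminus F : Submodule ℚ F) := rfl
    _ = finrank ℚ (Fplus F) + finrank ℚ (Fminus F) := by
        rw [← Submodule.finrank_sup_add_finrank_inf_eq, (disjoint_Fplus_Fminus F).eq_bot,
          finrank_bot, add_zero]
    _ = 2 * finrank ℚ (Fminus F) := by rw [finrank_Fplus_eq_finrank_Fminus h, two_mul]

theorem adjoin_Fminus (h : Fminus F ≠ ⊥) : adjoin ℚ (Fminus F : Set F) = FplusAddFminus F := by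
  obtain ⟨e, he, he0⟩ := (Submodule.ne_bot_iff _).1 h
  have mem_of_Fminus {x : F} (hx : x ∈ Fminus F) : x ∈ adjoin ℚ (Fminus F : Set F) :=
    subset_adjoin ℚ _ hx
  have mem_of_Fplus {x : F} (hx : x ∈ Fplus F) : x ∈ adjoin ℚ (Fminus F : Set F) := by
    rw [← mul_inv_cancel_right₀ he0 x]
    exact mul_mem (mem_of_Fminus (mul_mem_Fminus hx he)) (inv_mem (mem_of_Fminus he))
  refine le_antisymm (adjoin_le_iff.2 fun x hx ↦ Submodule.mem_sup_right hx) fun x hx ↦ ?_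
  obtain ⟨p, hp, m, hm, rfl⟩ := Submodule.mem_sup.1 (mem_FplusAddFminus.1 hx)
  exact add_mem (mem_of_Fplus hp) (mem_of_Fminus hm)

theorem adjoin_simple_eq_FplusAddFminus_iff (h : Fminus F ≠ ⊥) {a : F} (ha : a ∈ Fminus F) :
    ℚ⟮a⟯ = FplusAddFminus F ↔ (minpoly ℚ a).natDegree = 2 * finrank ℚ (Fminus F) := by
  rw [← finrank_FplusAddFminus h]
  exact adjoin_simple_eq_iff_natDegree_minpoly_eq_finrank (Submodule.mem_sup_right ha)

end RealAndImaginaryParts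

/-- If `F⁻ ≠ {0}`, then there exists `a ∈ F⁻` whose minimal polynomial over
`ℚ` has degree `2 ⬝ dim_ℚ F⁻`, and for any such `a`, the subfield `ℚ(a)`
generated by `a` equals `F⁺ + F⁻`. -/
theorem Fminus_generator_of_CM_subfield (F : Type*) [Field F] [NumberField F]
    (h : Fminus F ≠ ⊥) :
    (∃ a ∈ Fminus F,
      (minpoly ℚ a).natDegree = 2 * Module.finrank ℚ (Fminus F)) ∧
    ∀ a ∈ Fminus F,
      (minpoly ℚ a).natDegree = 2 * Module.finrank ℚ (Fminus F) →
      (Subfield.closure {a} : Set F) =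
        ((Fplus F + Fminus F : Submodule ℚ F) : Set F) := by
  refine ⟨?_, fun a ha hdeg ↦ ?_⟩
  · have : Finite (IntermediateField ℚ F) :=
      Field.finite_intermediateField_of_exists_primitive_element ℚ F
        (Field.exists_primitive_element ℚ F)
    obtain ⟨a, ha, generates⟩ := exists_mem_adjoin_simple_eq_adjoin (Fminus F)
    rw [adjoin_Fminus h] at generates
    exact ⟨a, ha, (adjoin_simple_eq_FplusAddFminus_iff h ha).1 generates⟩
  · have generates : ℚ⟮a⟯ = FplusAddFminus F :=
      (adjoin_simple_eq_FplusAddFminus_iff h ha).2 hdeg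
    calc (Subfield.closure {a} : Set F)
        = ℚ⟮a⟯.toSubfield := by rw [adjoin_rat_toSubfield]
      _ = FplusAddFminus F := by rw [generates]; rfl
      _ = (Fplus F + Fminus F : Submodule ℚ F) := rfl
end

section
/- Let P ∈ ℚ[X] be monic and irreducible, let F = ℚ[X]/(P(X)), let α ∈ ℂ be a root of P, and let Q(X,Y) ∈ ℚ[X,Y] be such that Q (viewed as a polynomial in Y over F) is monic, irreducible over F and divides P(Y) over F, and such that Q(α, conj(α)) = 0. Then for every polynomial a ∈ ℚ[X]: a(α) = −conj(a(α)) if and only if a(X) + a(Y) belongs to the ideal of ℚ[X,Y] generated by P(X) and Q(X,Y). -/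
/-!
Reduction modulo `P(X)` is a surjection `ℚ[X, Y] → F[Y]` with kernel `(P(X))`, and evaluation at
`(α, conj α)` factors through it. The kernel of the induced map `F[Y] → ℂ` is a proper ideal
containing the image `q` of `Q`; as `q` is irreducible in a principal ideal domain, `(q)` is
maximal and therefore equal to that kernel. Pulling back to `ℚ[X, Y]`, the polynomials vanishing at
`(α, conj α)` are exactly those in `(P(X), Q)`. Since `a` has rational coefficients,
`a(α) + conj (a(α))` is the value of `a(X) + a(Y)` at `(α, conj α)`.
-/

theorem ker_eq_span_singleton_of_irreducible {A B : Type*} [CommSemiring A]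
    [IsPrincipalIdealRing A] [Semiring B] [Nontrivial B] (φ : A →+* B) {q : A} (hq : Irreducible q)
    (hφq : φ q = 0) : RingHom.ker φ = Ideal.span {q} :=
  ((PrincipalIdealRing.isMaximal_of_irreducible hq).eq_of_le (RingHom.ker_ne_top φ)
    ((Ideal.span_singleton_le_iff_mem _).mpr hφq)).symm

section AdjoinRootPoly

variable {R S : Type*} [CommRing R] [CommRing S] [Algebra R S] (P : Polynomial R)

/-- Reduction of bivariate polynomials modulo `P(X)`, as the map `R[X, Y] → (R[X]/(P))[Y]`; the
first variable goes to the class of `X`, the second to the polynomial variable. -/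
noncomputable def toAdjoinRootPoly :
    MvPolynomial (Fin 2) R →ₐ[R] Polynomial (AdjoinRoot P) :=
  MvPolynomial.aeval ![Polynomial.C (AdjoinRoot.root P), Polynomial.X]

@[simp]
theorem toAdjoinRootPoly_X_zero :
    toAdjoinRootPoly P (MvPolynomial.X 0) = Polynomial.C (AdjoinRoot.root P) := by
  simp [toAdjoinRootPoly]

@[simp]
theorem toAdjoinRootPoly_X_one : toAdjoinRootPoly P (MvPolynomial.X 1) = Polynomial.X := by
  simp [toAdjoinRootPoly]

theorem toAdjoinRootPoly_aeval_X_zero (p : Polynomial R) :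
    toAdjoinRootPoly P (Polynomial.aeval (MvPolynomial.X 0) p) =
      Polynomial.C (AdjoinRoot.mk P p) := by
  rw [← Polynomial.aeval_algHom_apply, toAdjoinRootPoly_X_zero, ← AdjoinRoot.aeval_eq]
  exact Polynomial.aeval_algHom_apply Polynomial.CAlgHom (AdjoinRoot.root P) p

theorem toAdjoinRootPoly_surjective : Function.Surjective (toAdjoinRootPoly P) := by
  intro f
  induction f using Polynomial.induction_on' with
  | add f g hf hg =>
    obtain ⟨F, rfl⟩ := hf
    obtain ⟨G, rfl⟩ := hg
    exact ⟨F + G, map_add _ F G⟩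
  | monomial n c =>
    obtain ⟨p, rfl⟩ := AdjoinRoot.mk_surjective c
    refine ⟨Polynomial.aeval (MvPolynomial.X 0) p * MvPolynomial.X 1 ^ n, ?_⟩
    rw [map_mul, map_pow, toAdjoinRootPoly_aeval_X_zero, toAdjoinRootPoly_X_one,
      Polynomial.C_mul_X_pow_eq_monomial]

variable {P}

/-- Evaluation `(R[X]/(P))[Y] → S` at a point `(x, y)` whose first coordinate is a root of `P`. -/
noncomputable def evalAdjoinRootPoly (x y : S) (hx : Polynomial.aeval x P = 0) :
    Polynomial (AdjoinRoot P) →ₐ[R] S :=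
  Polynomial.aevalTower (AdjoinRoot.liftAlgHom P (Algebra.ofId R S) x hx) y

theorem evalAdjoinRootPoly_comp_toAdjoinRootPoly (x y : S) (hx : Polynomial.aeval x P = 0) :
    (evalAdjoinRootPoly x y hx).comp (toAdjoinRootPoly P) = MvPolynomial.aeval ![x, y] := by
  ext i
  fin_cases i
  · simpa [evalAdjoinRootPoly] using AdjoinRoot.liftAlgHom_root P (Algebra.ofId R S) x hx
  · simp [evalAdjoinRootPoly]

variable (P)

theorem ker_toAdjoinRootPoly :
    RingHom.ker (toAdjoinRootPoly P) =
      Ideal.span {Polynomial.aeval (MvPolynomial.X (0 : Fin 2)) P} := by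
  set I : Ideal (MvPolynomial (Fin 2) R) :=
    Ideal.span {Polynomial.aeval (MvPolynomial.X (0 : Fin 2)) P}
  let π := Ideal.Quotient.mkₐ R I
  have hroot : Polynomial.aeval (π (MvPolynomial.X 0)) P = 0 := by
    rw [Polynomial.aeval_algHom_apply]
    exact Ideal.Quotient.eq_zero_iff_mem.mpr (Ideal.mem_span_singleton_self _)
  have hfactor :
      (evalAdjoinRootPoly _ (π (MvPolynomial.X 1)) hroot).comp (toAdjoinRootPoly P) = π := by
    rw [evalAdjoinRootPoly_comp_toAdjoinRootPoly]
    ext i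
    fin_cases i <;> simp
  apply le_antisymm
  · intro f hf
    rw [RingHom.mem_ker] at hf
    have hπf : π f = 0 := by rw [← hfactor, AlgHom.comp_apply, hf, map_zero]
    exact Ideal.Quotient.eq_zero_iff_mem.mp hπf
  · rw [Ideal.span_singleton_le_iff_mem, RingHom.mem_ker, toAdjoinRootPoly_aeval_X_zero,
      AdjoinRoot.mk_self, map_zero]

theorem comap_toAdjoinRootPoly_span_singleton (Q : MvPolynomial (Fin 2) R) :
    Ideal.comap (toAdjoinRootPoly P) (Ideal.span {toAdjoinRootPoly P Q}) =
      Ideal.span {Polynomial.aeval (MvPolynomial.X (0 : Fin 2)) P, Q} := by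
  rw [← Set.image_singleton, ← Ideal.map_span,
    Ideal.comap_map_of_surjective' _ (toAdjoinRootPoly_surjective P), ker_toAdjoinRootPoly,
    Ideal.span_insert, sup_comm]

end AdjoinRootPoly

section Field

variable {K L : Type*} [Field K] [CommRing L] [Nontrivial L] [Algebra K L]

theorem ker_aeval_pair_eq_span {P : Polynomial K} (hP : Irreducible P) {Q : MvPolynomial (Fin 2) K}
    (hQ : Irreducible (toAdjoinRootPoly P Q)) {x y : L} (hx : Polynomial.aeval x P = 0)
    (hxy : MvPolynomial.aeval ![x, y] Q = 0) :
    RingHom.ker (MvPolynomial.aeval (R := K) ![x, y]) =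
      Ideal.span {Polynomial.aeval (MvPolynomial.X (0 : Fin 2)) P, Q} := by
  have : Fact (Irreducible P) := ⟨hP⟩
  have hfactor := evalAdjoinRootPoly_comp_toAdjoinRootPoly x y hx
  have hker : RingHom.ker (evalAdjoinRootPoly x y hx) = Ideal.span {toAdjoinRootPoly P Q} :=
    ker_eq_span_singleton_of_irreducible (evalAdjoinRootPoly x y hx : _ →+* L) hQ <|
      (DFunLike.congr_fun hfactor Q).trans hxy
  rw [← comap_toAdjoinRootPoly_span_singleton, ← hker, ← hfactor, AlgHom.comap_ker]

theorem aeval_neg_conj_iff_mem_ideal_general {P : Polynomial K} (hP : Irreducible P)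
    {Q : MvPolynomial (Fin 2) K} (hQ : Irreducible (toAdjoinRootPoly P Q)) {x y : L}
    (hx : Polynomial.aeval x P = 0) (hxy : MvPolynomial.aeval ![x, y] Q = 0) (a : Polynomial K) :
    Polynomial.aeval x a = -Polynomial.aeval y a ↔
      Polynomial.aeval (MvPolynomial.X (0 : Fin 2)) a +
          Polynomial.aeval (MvPolynomial.X (1 : Fin 2)) a ∈
        Ideal.span {Polynomial.aeval (MvPolynomial.X (0 : Fin 2)) P, Q} := by
  rw [← ker_aeval_pair_eq_span hP hQ hx hxy, RingHom.mem_ker, map_add,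
    ← Polynomial.aeval_algHom_apply, ← Polynomial.aeval_algHom_apply, eq_neg_iff_add_eq_zero]
  simp only [MvPolynomial.aeval_X, Matrix.cons_val_zero, Matrix.cons_val_one]

end Field

/-- Let `P ∈ ℚ[X]` be monic irreducible, `F = ℚ[X]/(P)`, `α ∈ ℂ` a root of
`P`, and `Q ∈ ℚ[X,Y]` such that `Q`, viewed as a polynomial in `Y` over `F`,
is monic, irreducible and divides `P(Y)`, and such that `Q(α, conj α) = 0`.
Then for every `a ∈ ℚ[X]`: `a(α) = −conj(a(α))` iff `a(X) + a(Y)` lies in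
the ideal of `ℚ[X,Y]` generated by `P(X)` and `Q(X,Y)`.
Here `ℚ[X,Y]` is `MvPolynomial (Fin 2) ℚ`, with `X`, `Y` the two variables,
and `F[Y]` is `Polynomial (AdjoinRoot P)`. -/
theorem aeval_neg_conj_iff_mem_ideal
    (P : Polynomial ℚ) (hPmonic : P.Monic) (hPirr : Irreducible P)
    (α : ℂ) (hα : Polynomial.aeval α P = 0)
    (Q : MvPolynomial (Fin 2) ℚ)
    (hQmonic : (MvPolynomial.aeval
      ![Polynomial.C (AdjoinRoot.root P), Polynomial.X] Q).Monic)
    (hQirr : Irreducible (MvPolynomial.aeval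
      ![Polynomial.C (AdjoinRoot.root P), Polynomial.X] Q))
    (hQdvd : (MvPolynomial.aeval
      ![Polynomial.C (AdjoinRoot.root P), Polynomial.X] Q) ∣
        Polynomial.map (algebraMap ℚ (AdjoinRoot P)) P)
    (hQα : MvPolynomial.aeval ![α, starRingEnd ℂ α] Q = 0)
    (a : Polynomial ℚ) :
    Polynomial.aeval α a = - starRingEnd ℂ (Polynomial.aeval α a) ↔
      Polynomial.aeval (MvPolynomial.X (0 : Fin 2)) a +
          Polynomial.aeval (MvPolynomial.X (1 : Fin 2)) a ∈
        Ideal.span {Polynomial.aeval (MvPolynomial.X (0 : Fin 2)) P, Q} := by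
  have hconj : starRingEnd ℂ (Polynomial.aeval α a) = Polynomial.aeval (starRingEnd ℂ α) a :=
    (Polynomial.aeval_algHom_apply (starRingEnd ℂ).toRatAlgHom α a).symm
  rw [hconj]
  exact aeval_neg_conj_iff_mem_ideal_general hPirr hQirr hα hQα a
end
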